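/- arXiv:1909.02922 — 2 statements merged into one kernel-verified Lean document; each statement's English description precedes it below -/
import Mathlib

section
/- Let G = PSL(2,ℂ) and H = π(SL(2,ℝ)). Let Γ be a discrete subgroup of G with Γ\G compact such that Γ ∩ H is cocompact in H (i.e. there is a compact subset K ⊆ H with H = (Γ∩H)·K). Let 𝒩 denote the normalizer of H in G and let D ⊆ V be a compact subset. Let g ∈ G with g ∉ Γ𝒩V = {γnv : γ ∈ Γ, n ∈ 𝒩, v ∈ V}, and set x = Γg ∈ Γ\G. Then for every ε > 0 there exists an open subset Ω of Γ\G containing {Γ(nd) : n ∈ 𝒩, d ∈ D} such that for every T > 0 the Lebesgue measure of {t ∈ [0, T] : x·u_t ∈ Ω} is at most εT. -/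
open scoped MatrixGroups
open Matrix Filter

noncomputable section

/-- `SL(2,ℂ)`. -/
abbrev SL2C := Matrix.SpecialLinearGroup (Fin 2) ℂ

instance : TopologicalSpace SL2C := instTopologicalSpaceSubtype

/-- `G = PSL(2,ℂ) = SL(2,ℂ)/{±I}`, with the quotient topology. -/
abbrev PSL2C := Matrix.ProjectiveSpecialLinearGroup (Fin 2) ℂ

/-- The projection `π : SL(2,ℂ) → PSL(2,ℂ)`. -/
def pr : SL2C →* PSL2C := QuotientGroup.mk' _

/-- The upper triangular unipotent matrix `[[1, t],[0, 1]]` as an element of `SL(2,ℂ)`. -/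
def uMat (t : ℂ) : SL2C := ⟨!![1, t; 0, 1], by simp [Matrix.det_fin_two_of]⟩

/-- `u_t = π [[1, t],[0, 1]]` for `t ∈ ℝ`. -/
def uu (t : ℝ) : PSL2C := pr (uMat t)

/-- `v_s = π [[1, is],[0, 1]]` for `s ∈ ℝ`. -/
def vv (s : ℝ) : PSL2C := pr (uMat (s * Complex.I))

/-- The subgroup `U = {u_t : t ∈ ℝ}` as a subset of `PSL(2,ℂ)`. -/
def Uset : Set PSL2C := Set.range uu

/-- The subgroup `V = {v_s : s ∈ ℝ}` as a subset of `PSL(2,ℂ)`. -/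
def Vset : Set PSL2C := Set.range vv

/-- The subgroup `N = {π [[1, z],[0,1]] : z ∈ ℂ}` as a subset of `PSL(2,ℂ)`. -/
def Nset : Set PSL2C := {x | ∃ z : ℂ, x = pr (uMat z)}

/-- `H = π (SL(2,ℝ))`, the image in `PSL(2,ℂ)` of the real matrices. -/
def Hset : Set PSL2C :=
  {x | ∃ g : Matrix.SpecialLinearGroup (Fin 2) ℝ,
    x = pr (Matrix.SpecialLinearGroup.map (algebraMap ℝ ℂ) g)}

/-- The upper triangular matrix `[[a, z],[0, a⁻¹]]` as an element of `SL(2,ℂ)`,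
for a nonzero real `a`. -/
def tri (a : ℝ) (ha : a ≠ 0) (z : ℂ) : SL2C :=
  ⟨!![(a : ℂ), z; 0, (a : ℂ)⁻¹], by
    have h : (a : ℂ) ≠ 0 := by exact_mod_cast ha
    simp [Matrix.det_fin_two_of, mul_inv_cancel₀ h]⟩

/-- `AN = {π [[a, z],[0, a⁻¹]] : a > 0 real, z ∈ ℂ}`. -/
def ANset : Set PSL2C := {x | ∃ (a : ℝ) (ha : 0 < a) (z : ℂ), x = pr (tri a ha.ne' z)}

/-- `AV = {π [[a, ib],[0, a⁻¹]] : a > 0 real, b ∈ ℝ}`. -/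
def AVset : Set PSL2C :=
  {x | ∃ (a : ℝ) (ha : 0 < a) (b : ℝ), x = pr (tri a ha.ne' (b * Complex.I))}

/-- `A = {π diag(a, a⁻¹) : a > 0 real}`. -/
def Aset : Set PSL2C := {x | ∃ (a : ℝ) (ha : 0 < a), x = pr (tri a ha.ne' 0)}

variable (Γ : Subgroup PSL2C)

/-- The space `Γ\\G` of right cosets `Γg`, with the quotient topology. -/
abbrev XΓ := Quotient (QuotientGroup.rightRel Γ)

/-- The natural projection `G → Γ\\G`. -/
def mkX (g : PSL2C) : XΓ Γ := Quotient.mk'' g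

/-- The right translation action of `G` on `Γ\\G`: `(Γg₀)·g = Γ(g₀g)`. -/
def act (x : XΓ Γ) (g : PSL2C) : XΓ Γ :=
  Quotient.map' (fun h => h * g)
    (fun a b hab => by
      rw [QuotientGroup.rightRel_apply] at hab ⊢
      simpa [_root_.mul_inv_rev, mul_assoc] using hab) x

/-- The orbit `xS = {x·s : s ∈ S}` of a point `x ∈ Γ\\G` under a subset `S ⊆ G`. -/
def orb (x : XΓ Γ) (S : Set PSL2C) : Set (XΓ Γ) := (fun s => act Γ x s) '' S

/-- `Γ` is a lattice in `G`: there is a nonzero finite Borel measure on `Γ\\G`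
invariant under the right translation action of `G`. -/
def IsLattice : Prop :=
  letI : MeasurableSpace (XΓ Γ) := borel _
  ∃ μ : MeasureTheory.Measure (XΓ Γ), μ ≠ 0 ∧ MeasureTheory.IsFiniteMeasure μ ∧
    ∀ g : PSL2C, MeasureTheory.Measure.map (fun x => act Γ x g) μ = μ


/-- The normalizer `𝒩 = {g ∈ G : gHg⁻¹ = H}` of `H` in `PSL(2,ℂ)`, as a set. -/
def NmlH : Set PSL2C := {g | (fun h => g * h * g⁻¹) '' Hset = Hset}

/-!
To `g = π(m)` attach `P(g) = m⁻¹ m̄`, the matrix of the reflection in the circle `g⁻¹(ℝ ∪ {∞})`. It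
is unchanged under left multiplication by `H`, changes at most by a sign under `𝒩`, and `g ∈ 𝒩V`
exactly when `P(g) = ±[[1, ir], [0, 1]]`. The neighbourhood `Ω` is the image of the set of `g` whose
`P(g)` is near such a matrix with `|r| < R`. Along the orbit, `P(g u_t)` has constant `P₁₀` and
`Re P₀₀`, and its coordinate `Im P₀₁` is a polynomial of degree at most two in `t`.

Cocompactness of `Γ ∩ H` makes the neighbourhood `δ`-close to the lines `|r| < R'` injective modulo
`Γ ∩ 𝒩` for small `δ`, because the diagonal flow contracts the bounded range of `r` into a small
neighbourhood of `𝒩`. Hence the visits of the orbit to the larger neighbourhood, indexed by the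
translates `γ g`, are pairwise disjoint or equal, and each is a sublevel set of one polynomial. As
`g ∉ Γ𝒩V`, every such polynomial is at least `R'` in absolute value at time `0`, and a Remez
inequality on each component of `{|p| < R'}` bounds the proportion of time with `|p| < R`.
-/

section Remez

open MeasureTheory Set Polynomial

lemma measure_inter_sUnion_le {X : Type*} [TopologicalSpace X] [TopologicalSpace.SeparableSpace X]
    [MeasurableSpace X] [OpensMeasurableSpace X] {μ : Measure X} {A : Set X} {c : ENNReal}
    {𝒱 : Set (Set X)} (hopen : ∀ V ∈ 𝒱, IsOpen V) (hdisj : 𝒱.PairwiseDisjoint id)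
    (hle : ∀ V ∈ 𝒱, μ (A ∩ V) ≤ c * μ V) : μ (A ∩ ⋃₀ 𝒱) ≤ c * μ (⋃₀ 𝒱) := by
  have hdisj' : (𝒱 \ {∅}).PairwiseDisjoint id := hdisj.subset sdiff_subset
  have hcount : (𝒱 \ {∅}).Countable :=
    hdisj'.countable_of_isOpen (fun V hV => hopen V hV.1)
      fun V hV => nonempty_iff_ne_empty.2 hV.2
  rw [← sUnion_sdiff_singleton_empty]
  calc μ (A ∩ ⋃₀ (𝒱 \ {∅}))
      = μ (⋃ V ∈ 𝒱 \ {∅}, A ∩ V) := by rw [sUnion_eq_biUnion, inter_iUnion₂]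
    _ ≤ ∑' V : ↥(𝒱 \ {∅}), μ (A ∩ V) := measure_biUnion_le μ hcount _
    _ ≤ ∑' V : ↥(𝒱 \ {∅}), c * μ V := ENNReal.tsum_le_tsum fun V => hle V V.2.1
    _ = c * μ (⋃₀ (𝒱 \ {∅})) := by
      rw [ENNReal.tsum_mul_left,
        measure_sUnion hcount hdisj' fun V hV => (hopen V hV.1).measurableSet]

lemma exists_connectedComponentIn_eq_Ioo {W : Set ℝ} (hW : IsOpen W) (hbelow : BddBelow W)
    (habove : BddAbove W) {x : ℝ} (hx : x ∈ W) :
    ∃ i s, i ∉ W ∧ connectedComponentIn W x = Ioo i s := by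
  set C := connectedComponentIn W x
  have hCW : C ⊆ W := connectedComponentIn_subset W x
  have hC : IsConnected C := isConnected_connectedComponentIn_iff.2 hx
  have hCopen : IsOpen C := hW.connectedComponentIn
  have hclosed : closure C ∩ W ⊆ C :=
    (isPreconnected_connectedComponentIn.subset_closure
      (subset_inter subset_closure hCW) inter_subset_left).subset_connectedComponentIn
      ⟨subset_closure (mem_connectedComponentIn hx), hx⟩ inter_subset_right
  have hinf : sInf C ∉ C := fun h => by
    obtain ⟨y, hy, hyC⟩ := Filter.nonempty_of_mem (inter_mem self_mem_nhdsWithin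
      (mem_nhdsWithin_of_mem_nhds (hCopen.mem_nhds h) : C ∈ nhdsWithin _ (Iio (sInf C))))
    exact (csInf_le (hbelow.mono hCW) hyC).not_gt hy
  have hsup : sSup C ∉ C := fun h => by
    obtain ⟨y, hy, hyC⟩ := Filter.nonempty_of_mem (inter_mem self_mem_nhdsWithin
      (mem_nhdsWithin_of_mem_nhds (hCopen.mem_nhds h) : C ∈ nhdsWithin _ (Ioi (sSup C))))
    exact (le_csSup (habove.mono hCW) hyC).not_gt hy
  refine ⟨sInf C, sSup C, fun h => hinf (hclosed
    ⟨csInf_mem_closure hC.nonempty (hbelow.mono hCW), h⟩), Subset.antisymm (fun y hy => ?_)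
    (hC.Ioo_csInf_csSup_subset (hbelow.mono hCW) (habove.mono hCW))⟩
  exact ⟨(csInf_le (hbelow.mono hCW) hy).lt_of_ne fun h => hinf (h ▸ hy),
    (le_csSup (habove.mono hCW) hy).lt_of_ne fun h => hsup (h ▸ hy)⟩

lemma measure_inter_le_of_forall_Ioo {μ : Measure ℝ} {W A : Set ℝ} {c : ENNReal}
    (hW : IsOpen W) (hbelow : BddBelow W) (habove : BddAbove W)
    (hle : ∀ i s, i ∉ W → Ioo i s ⊆ W → μ (A ∩ Ioo i s) ≤ c * μ (Ioo i s)) :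
    μ (A ∩ W) ≤ c * μ W := by
  have hUnion : ⋃₀ (connectedComponentIn W '' W) = W := by
    refine Subset.antisymm (sUnion_subset ?_) fun x hx =>
      mem_sUnion_of_mem (mem_connectedComponentIn hx) (mem_image_of_mem _ hx)
    rintro _ ⟨x, -, rfl⟩
    exact connectedComponentIn_subset W x
  rw [← hUnion]
  refine measure_inter_sUnion_le ?_ ?_ ?_
  · rintro _ ⟨x, -, rfl⟩
    exact hW.connectedComponentIn
  · rintro _ ⟨x, -, rfl⟩ _ ⟨y, -, rfl⟩ hne
    exact disjoint_left.2 fun z hzx hzy =>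
      hne ((connectedComponentIn_eq hzx).trans (connectedComponentIn_eq hzy).symm)
  · rintro _ ⟨x, hx, rfl⟩
    obtain ⟨i, s, hi, hC⟩ := exists_connectedComponentIn_eq_Ioo hW hbelow habove hx
    have hsub := connectedComponentIn_subset W x
    rw [hC] at hsub ⊢
    exact hle i s hi hsub

lemma exists_separated_finset {S : Set ℝ} {κ : ℝ} (hκ : 0 ≤ κ) (n : ℕ)
    (hS : ENNReal.ofReal (n * (2 * κ)) < volume S) :
    ∃ F : Finset ℝ, ↑F ⊆ S ∧ F.card = n + 1 ∧ (F : Set ℝ).Pairwise fun x y => κ ≤ |x - y| := by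
  induction n with
  | zero =>
    obtain ⟨x, hx⟩ := nonempty_of_measure_ne_zero (bot_lt_iff_ne_bot.1 (bot_le.trans_lt hS))
    exact ⟨{x}, by simpa using hx, by simp, by simp⟩
  | succ n ih =>
    obtain ⟨F, hFS, hcard, hsep⟩ := ih <| lt_of_le_of_lt (by gcongr; simp) hS
    have hballs : volume (⋃ x ∈ F, Metric.closedBall x κ) < volume S :=
      calc volume (⋃ x ∈ F, Metric.closedBall x κ)
          ≤ ∑ x ∈ F, volume (Metric.closedBall x κ) := measure_biUnion_finset_le F _
        _ = ENNReal.ofReal (↑(n + 1) * (2 * κ)) := by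
          simp only [Real.volume_closedBall, Finset.sum_const, hcard, nsmul_eq_mul]
          rw [ENNReal.ofReal_mul (Nat.cast_nonneg _), ENNReal.ofReal_natCast]
        _ < volume S := hS
    obtain ⟨y, hyS, hy⟩ := not_subset.1 fun h => (measure_mono h).not_gt hballs
    have hfar : ∀ x ∈ F, κ < |y - x| := by
      simpa only [mem_iUnion, Metric.mem_closedBall, Real.dist_eq, not_exists, not_le] using hy
    have hyF : y ∉ F := fun h => absurd (hfar y h) (by simpa using hκ)
    refine ⟨insert y F, by simpa [insert_subset_iff] using ⟨hyS, hFS⟩, by simp [hyF, hcard], ?_⟩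
    rw [Finset.coe_insert]
    exact pairwise_insert.2 ⟨hsep, fun x hx _ =>
      ⟨(hfar x hx).le, (abs_sub_comm x y).symm ▸ (hfar x hx).le⟩⟩

lemma abs_eval_le_of_separated {p : ℝ[X]} {F : Finset ℝ} {κ R L x : ℝ} (hκ : 0 < κ)
    (hdeg : p.natDegree < F.card) (hsep : (F : Set ℝ).Pairwise fun y z => κ ≤ |y - z|)
    (hR : ∀ y ∈ F, |p.eval y| ≤ R) (hL : ∀ y ∈ F, |x - y| ≤ L) :
    |p.eval x| ≤ F.card * (R * (L / κ) ^ (F.card - 1)) := by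
  have hinterp : p = Lagrange.interpolate F id fun y => p.eval y :=
    Lagrange.eq_interpolate (injOn_id _)
      (degree_le_natDegree.trans_lt (by exact_mod_cast hdeg))
  have hbasis : ∀ y ∈ F, |(Lagrange.basis F id y).eval x| ≤ (L / κ) ^ (F.card - 1) := by
    intro y hy
    rw [Lagrange.basis, eval_prod, Finset.abs_prod, ← Finset.card_erase_of_mem hy,
      ← Finset.prod_const]
    refine Finset.prod_le_prod (fun _ _ => abs_nonneg _) fun z hz => ?_
    obtain ⟨hzy, hz⟩ := Finset.mem_erase.1 hz
    have hκz : κ ≤ |y - z| := hsep hy hz hzy.symm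
    simp only [Lagrange.basisDivisor, id, eval_mul, eval_C, eval_sub, eval_X, abs_mul, abs_inv]
    rw [inv_mul_eq_div]
    exact div_le_div₀ ((abs_nonneg _).trans (hL z hz)) (hL z hz) hκ hκz
  calc |p.eval x|
      = |∑ y ∈ F, p.eval y * (Lagrange.basis F id y).eval x| := by
        conv_lhs => rw [hinterp, Lagrange.interpolate_apply]
        simp only [eval_finsetSum, eval_mul, eval_C]
    _ ≤ ∑ y ∈ F, |p.eval y * (Lagrange.basis F id y).eval x| := Finset.abs_sum_le_sum_abs _ _
    _ ≤ ∑ _y ∈ F, R * (L / κ) ^ (F.card - 1) := by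
        refine Finset.sum_le_sum fun y hy => ?_
        rw [abs_mul]
        exact mul_le_mul (hR y hy) (hbasis y hy) (abs_nonneg _) ((abs_nonneg _).trans (hR y hy))
    _ = F.card * (R * (L / κ) ^ (F.card - 1)) := by rw [Finset.sum_const, nsmul_eq_mul]

lemma abs_eval_le_of_lt_volume {p : ℝ[X]} {n : ℕ} (hn : p.natDegree ≤ n) {ε s t R : ℝ} (hε : 0 < ε)
    {S : Set ℝ} (hS : S ⊆ Icc s t) (hR : ∀ y ∈ S, |p.eval y| ≤ R)
    (hvol : ENNReal.ofReal (ε * (t - s)) < volume S) {x : ℝ} (hx : x ∈ Icc s t) :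
    |p.eval x| ≤ (n + 1) * (R * (2 * (n + 1) / ε) ^ n) := by
  have hst : 0 < t - s := by
    by_contra! h
    have : volume S ≤ ENNReal.ofReal (t - s) := (measure_mono hS).trans_eq Real.volume_Icc
    rw [ENNReal.ofReal_of_nonpos h, nonpos_iff_eq_zero] at this
    exact not_lt_bot (this ▸ hvol)
  set κ := ε * (t - s) / (2 * (n + 1)) with hκ_def
  have hκ : 0 < κ := by positivity
  have hnκ : n * (2 * κ) ≤ ε * (t - s) :=
    calc n * (2 * κ) ≤ (n + 1) * (2 * κ) := by gcongr; simp
      _ = ε * (t - s) := by rw [hκ_def]; field_simp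
  obtain ⟨F, hFS, hcard, hsep⟩ :=
    exists_separated_finset hκ.le n ((ENNReal.ofReal_le_ofReal hnκ).trans_lt hvol)
  have hbound := abs_eval_le_of_separated hκ (by omega : p.natDegree < F.card) hsep
    (fun y hy => hR y (hFS hy))
    fun y hy => abs_sub_le_of_le_of_le hx.1 hx.2 (hS (hFS hy)).1 (hS (hFS hy)).2
  have hratio : (t - s) / κ = 2 * (n + 1) / ε := by rw [hκ_def]; field_simp
  simpa [hcard, hratio] using hbound

lemma volume_sublevel_le {p : ℝ[X]} {n : ℕ} (hn : p.natDegree ≤ n) {ε R R' : ℝ} (hε : 0 < ε)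
    (hRR' : R ≤ R') (hR' : (n + 1) * (R * (2 * (n + 1) / ε) ^ n) < R') {a b : ℝ}
    (ha : R' ≤ |p.eval a|) :
    volume {x | x ∈ Ioo a b ∧ |p.eval x| < R} ≤
      ENNReal.ofReal ε * volume {x | x ∈ Ioo a b ∧ |p.eval x| < R'} := by
  set W := {x | x ∈ Ioo a b ∧ |p.eval x| < R'}
  have hW : IsOpen W := isOpen_Ioo.inter (isOpen_lt p.continuous.abs continuous_const)
  have hWab : W ⊆ Ioo a b := fun x hx => hx.1
  refine (measure_mono fun x hx => ⟨hx.2, hx.1, hx.2.trans_le hRR'⟩ :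
      _ ≤ volume ({x | |p.eval x| < R} ∩ W)).trans
    (measure_inter_le_of_forall_Ioo hW (bddBelow_Ioo.mono hWab) (bddAbove_Ioo.mono hWab) ?_)
  intro i s hi his
  by_contra! hlt
  have his' : i < s := by
    by_contra! h
    simp [Ioo_eq_empty_of_le h] at hlt
  obtain ⟨hai, hsb⟩ := (Ioo_subset_Ioo_iff his').1 (his.trans hWab)
  have hpi : |p.eval i| < R' := by
    refine (abs_eval_le_of_lt_volume hn hε (S := {x | |p.eval x| < R} ∩ Ioo i s)
      (inter_subset_right.trans Ioo_subset_Icc_self)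
      (fun y hy => le_of_lt hy.1) ?_ (left_mem_Icc.2 his'.le)).trans_lt hR'
    rwa [ENNReal.ofReal_mul hε.le, ← Real.volume_Ioo]
  obtain rfl | hai := hai.eq_or_lt
  · exact ha.not_gt hpi
  · exact hi ⟨⟨hai, his'.trans_le hsb⟩, hpi⟩

end Remez

section DiscreteSubgroup

open scoped Topology Pointwise

lemma exists_nhds_mem_of_mem_mul_mul {G : Type*} [Group G] [TopologicalSpace G]
    [IsTopologicalGroup G] [T2Space G] (Γ N : Subgroup G) [DiscreteTopology Γ] {K : Set G}
    (hKN : K ⊆ N) (hK : IsCompact K) (hcov : ∀ n ∈ N, ∃ γ ∈ Γ, γ ∈ N ∧ ∃ k ∈ K, n = γ * k) :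
    ∃ O ∈ 𝓝 (1 : G), ∀ γ ∈ Γ, γ ∈ (N * O * N : Set G) → γ ∈ N := by
  have hclosed : IsClosed ((Γ : Set G) \ N) :=
    isClosed_of_subset_discrete_closed Set.sdiff_subset ⟨inferInstanceAs (DiscreteTopology Γ)⟩
      Subgroup.isClosed_of_discrete
  have havoid : ∀ᶠ o in 𝓝 (1 : G), ∀ q ∈ K ×ˢ K, q.1 * o * q.2⁻¹ ∉ (Γ : Set G) \ N := by
    refine (hK.prod hK).eventually_forall_of_forall_eventually fun q hq => ?_
    have hcont : Continuous fun z : G × G × G => z.2.1 * z.1 * z.2.2⁻¹ := by fun_prop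
    refine hcont.continuousAt.eventually_mem (hclosed.isOpen_compl.mem_nhds ?_)
    simpa using fun _ => N.mul_mem (hKN hq.1) (N.inv_mem (hKN hq.2))
  refine ⟨_, havoid, fun γ hγ hmem => ?_⟩
  obtain ⟨_, ⟨n₁, hn₁, o, ho, rfl⟩, n₂, hn₂, rfl⟩ := hmem
  obtain ⟨γ₁, hγ₁, hγ₁N, k₁, hk₁, rfl⟩ := hcov n₁ hn₁
  obtain ⟨γ₂, hγ₂, hγ₂N, k₂, hk₂, hn₂eq⟩ := hcov n₂⁻¹ (N.inv_mem hn₂)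
  have hγ' : γ₁⁻¹ * (γ₁ * k₁ * o * n₂) * γ₂ = k₁ * o * k₂⁻¹ := by
    rw [inv_eq_iff_eq_inv.1 hn₂eq]
    group
  by_contra hnot
  refine ho (k₁, k₂) ⟨hk₁, hk₂⟩ (hγ' ▸ ⟨?_, ?_⟩)
  · exact Γ.mul_mem (Γ.mul_mem (Γ.inv_mem hγ₁) hγ) hγ₂
  · exact fun h => hnot ((N.mul_mem_cancel_left (N.inv_mem hγ₁N)).1
      ((N.mul_mem_cancel_right hγ₂N).1 h))

end DiscreteSubgroup

section PSL2C

open scoped Topology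

lemma pr_surjective : Function.Surjective pr := QuotientGroup.mk'_surjective _

lemma continuous_pr : Continuous pr := QuotientGroup.continuous_mk

instance : IsTopologicalGroup SL2C :=
  Matrix.SpecialLinearGroup.topologicalGroup

instance : IsTopologicalGroup PSL2C :=
  inferInstanceAs (IsTopologicalGroup (SL2C ⧸ Subgroup.center SL2C))

instance : T2Space SL2C :=
  inferInstanceAs (T2Space {A : Matrix (Fin 2) (Fin 2) ℂ // A.det = 1})

lemma isClosed_center_SL2C : IsClosed (Subgroup.center SL2C : Set SL2C) := by
  rw [Subgroup.coe_center, ← Set.centralizer_univ]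
  exact Set.isClosed_centralizer _

instance : T2Space PSL2C :=
  have := isClosed_center_SL2C
  inferInstanceAs (T2Space (SL2C ⧸ Subgroup.center SL2C))

lemma continuous_entry (i j : Fin 2) : Continuous fun m : SL2C => m i j :=
  continuous_subtype_val.matrix_elem i j

lemma exists_pos_forall_mem_of_mem_nhds {m₀ : SL2C} {W : Set SL2C} (hW : W ∈ 𝓝 m₀) :
    ∃ r > 0, ∀ m : SL2C, (∀ i j, ‖m i j - m₀ i j‖ < r) → m ∈ W := by
  obtain ⟨M, hM, hMW⟩ := mem_nhds_induced _ _ _ |>.1 hW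
  obtain ⟨r, hr, hball⟩ := Metric.mem_nhds_iff (α := Fin 2 → Fin 2 → ℂ) |>.1 hM
  refine ⟨r, hr, fun m hm => hMW (hball ?_)⟩
  refine (dist_pi_lt_iff hr).2 fun i => (dist_pi_lt_iff hr).2 fun j => ?_
  rw [dist_eq_norm]
  exact hm i j

lemma mem_center_SL2C_iff {z : SL2C} : z ∈ Subgroup.center SL2C ↔ z = 1 ∨ z = -1 := by
  rw [Matrix.SpecialLinearGroup.mem_center_iff, Fintype.card_fin]
  constructor
  · rintro ⟨r, hr, hz⟩
    obtain rfl | rfl := sq_eq_one_iff.1 hr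
    · exact .inl (Subtype.ext (by simp [← hz]))
    · exact .inr (Subtype.ext (by rw [← hz, map_neg, map_one]; rfl))
  · rintro (rfl | rfl)
    · exact ⟨1, by simp, by simp⟩
    · exact ⟨-1, by simp, by rw [map_neg, map_one]; rfl⟩

end PSL2C

section CircleReflection

open scoped Topology ComplexConjugate Pointwise

/-- Entrywise complex conjugation on `SL(2,ℂ)`. -/
def conjSL : SL2C →* SL2C := Matrix.SpecialLinearGroup.map (starRingEnd ℂ)

lemma conjSL_apply (m : SL2C) (i j : Fin 2) : conjSL m i j = conj (m i j) := rfl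

lemma conjSL_conjSL (m : SL2C) : conjSL (conjSL m) = m := by
  ext i j
  simp only [conjSL_apply, Complex.conj_conj]

lemma conjSL_eq_self_of_mem_center {z : SL2C} (hz : z ∈ Subgroup.center SL2C) : conjSL z = z := by
  obtain rfl | rfl := mem_center_SL2C_iff.1 hz
  · exact map_one conjSL
  · ext i j
    rw [conjSL_apply, Matrix.SpecialLinearGroup.coe_neg, Matrix.SpecialLinearGroup.coe_one,
      neg_apply, map_neg, one_apply]
    split <;> simp

lemma conjSL_eq_self_iff {m : SL2C} :
    conjSL m = m ↔ ∃ h : SL(2, ℝ), Matrix.SpecialLinearGroup.map (algebraMap ℝ ℂ) h = m := by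
  constructor
  · intro hm
    have hre : ((m : Matrix (Fin 2) (Fin 2) ℂ).map Complex.re).map (algebraMap ℝ ℂ) = m := by
      ext i j
      exact Complex.conj_eq_iff_re.1 (by rw [← conjSL_apply, hm])
    refine ⟨⟨(m : Matrix (Fin 2) (Fin 2) ℂ).map Complex.re, ?_⟩, Subtype.ext hre⟩
    apply (algebraMap ℝ ℂ).injective
    rw [RingHom.map_det, RingHom.mapMatrix_apply, hre, m.det_coe, map_one]
  · rintro ⟨h, rfl⟩
    ext i j
    exact Complex.conj_ofReal _

/-- The element `P = m⁻¹ m̄` attached to `g = π(m)`; it is well defined because the centre is real.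
The map `z ↦ P(z̄)` is the reflection of the Riemann sphere in the circle `g⁻¹(ℝ ∪ {∞})`, so
`circleRefl` embeds the space `H\G` of oriented circles in `SL(2,ℂ)`. -/
def circleRefl (g : PSL2C) : SL2C :=
  Quotient.liftOn' g (fun m => m⁻¹ * conjSL m) fun a b hab => by
    obtain ⟨z, hz, rfl⟩ : ∃ z ∈ Subgroup.center SL2C, a * z = b :=
      ⟨_, QuotientGroup.leftRel_apply.1 hab, mul_inv_cancel_left a b⟩
    rw [map_mul, conjSL_eq_self_of_mem_center hz, Subgroup.mem_center_iff.1 hz a,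
      Subgroup.mem_center_iff.1 hz (conjSL a), _root_.mul_inv_rev, mul_assoc, inv_mul_cancel_left]

lemma circleRefl_pr (m : SL2C) : circleRefl (pr m) = m⁻¹ * conjSL m := rfl

lemma continuous_conjSL : Continuous conjSL :=
  Complex.continuous_conj.specialLinearGroup_map

lemma continuous_circleRefl : Continuous circleRefl :=
  (continuous_inv.mul continuous_conjSL).quotient_liftOn' _

lemma circleRefl_one : circleRefl 1 = 1 := by
  rw [← map_one pr, circleRefl_pr, map_one, inv_one, mul_one]

lemma circleRefl_mul_pr (g : PSL2C) (m : SL2C) :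
    circleRefl (g * pr m) = m⁻¹ * circleRefl g * conjSL m := by
  obtain ⟨m', rfl⟩ := pr_surjective g
  rw [← map_mul, circleRefl_pr, circleRefl_pr, map_mul, _root_.mul_inv_rev]
  simp only [mul_assoc]

lemma conjSL_circleRefl (g : PSL2C) : conjSL (circleRefl g) = (circleRefl g)⁻¹ := by
  obtain ⟨m, rfl⟩ := pr_surjective g
  rw [circleRefl_pr, map_mul, map_inv, conjSL_conjSL, _root_.mul_inv_rev, inv_inv]

lemma circleRefl_mul_of_mem_center {n : PSL2C} (hn : circleRefl n ∈ Subgroup.center SL2C)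
    (g : PSL2C) : circleRefl (n * g) = circleRefl n * circleRefl g := by
  obtain ⟨m, rfl⟩ := pr_surjective g
  rw [circleRefl_mul_pr, circleRefl_pr, Subgroup.mem_center_iff.1 hn, mul_assoc]

lemma mem_Hset_iff {g : PSL2C} : g ∈ Hset ↔ circleRefl g = 1 := by
  constructor
  · rintro ⟨h, rfl⟩
    rw [circleRefl_pr, conjSL_eq_self_iff.2 ⟨h, rfl⟩, inv_mul_cancel]
  · intro hg
    obtain ⟨m, rfl⟩ := pr_surjective g
    obtain ⟨h, rfl⟩ := conjSL_eq_self_iff.1 (inv_mul_eq_one.1 hg).symm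
    exact ⟨h, rfl⟩

lemma mul_inv_mem_Hset_iff {g₁ g₂ : PSL2C} :
    g₁ * g₂⁻¹ ∈ Hset ↔ circleRefl g₁ = circleRefl g₂ := by
  obtain ⟨m, rfl⟩ := pr_surjective g₂
  rw [mem_Hset_iff, ← map_inv, circleRefl_mul_pr, inv_inv, map_inv, mul_inv_eq_one, circleRefl_pr,
    eq_inv_mul_iff_mul_eq]

lemma coe_normalizer_Hset : (Subgroup.normalizer Hset : Set PSL2C) = NmlH :=
  Set.ext fun _ => Subgroup.mem_normalizer_iff_conj_image_eq

lemma mem_center_of_commute_real {z : SL2C}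
    (hz : ∀ h : SL(2, ℝ), Commute z (Matrix.SpecialLinearGroup.map (algebraMap ℝ ℂ) h)) :
    z ∈ Subgroup.center SL2C := by
  have key (A : Matrix (Fin 2) (Fin 2) ℝ) (hA : A.det = 1) :
      (z : Matrix (Fin 2) (Fin 2) ℂ) * A.map (algebraMap ℝ ℂ) = A.map (algebraMap ℝ ℂ) * z :=
    congrArg Subtype.val (hz ⟨A, hA⟩)
  have hupper := key !![1, 1; 0, 1] (by simp)
  have hlower := key !![1, 0; 1, 1] (by simp)
  have h10 : z 1 0 = 0 := by simpa [mul_apply, Fin.sum_univ_two] using congrFun₂ hupper 0 0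
  have h01 : z 0 1 = 0 := by simpa [mul_apply, Fin.sum_univ_two] using congrFun₂ hlower 0 0
  have h00 : z 0 0 = z 1 1 := by
    simpa [mul_apply, Fin.sum_univ_two, h01] using congrFun₂ hupper 0 1
  rw [Matrix.SpecialLinearGroup.mem_center_iff, Fintype.card_fin]
  refine ⟨z 0 0, ?_, ?_⟩
  · have := z.det_coe
    rwa [det_fin_two, h10, mul_zero, sub_zero, ← h00, ← sq] at this
  · ext i j
    fin_cases i <;> fin_cases j <;> simp [h10, h01, h00]

lemma mem_normalizer_Hset_iff {g : PSL2C} :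
    g ∈ Subgroup.normalizer Hset ↔ circleRefl g ∈ Subgroup.center SL2C := by
  simp only [Subgroup.mem_set_normalizer_iff, mul_inv_mem_Hset_iff]
  constructor
  · intro hg
    refine mem_center_of_commute_real fun h => ?_
    have hfix := (hg _).1 ⟨h, rfl⟩
    rw [circleRefl_mul_pr, conjSL_eq_self_iff.2 ⟨h, rfl⟩, mul_assoc, inv_mul_eq_iff_eq_mul] at hfix
    exact hfix
  · intro hg h
    rw [circleRefl_mul_of_mem_center hg, mul_eq_left, mem_Hset_iff]

lemma Hset_subset_normalizer : Hset ⊆ Subgroup.normalizer Hset := fun _ hh =>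
  mem_normalizer_Hset_iff.2 (mem_Hset_iff.1 hh ▸ one_mem _)

lemma exists_circleRefl_eq {z : SL2C} (hz : z ∈ Subgroup.center SL2C) : ∃ n, circleRefl n = z := by
  obtain rfl | rfl := mem_center_SL2C_iff.1 hz
  · exact ⟨1, circleRefl_one⟩
  · obtain ⟨m, hm⟩ : ∃ m : SL2C, m.1 = !![Complex.I, 0; 0, -Complex.I] := ⟨⟨_, by simp⟩, rfl⟩
    refine ⟨pr m, ?_⟩
    rw [circleRefl_pr, inv_mul_eq_iff_eq_mul]
    ext i j
    fin_cases i <;> fin_cases j <;> simp [conjSL_apply, hm]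

lemma circleRefl_one_one (g : PSL2C) : circleRefl g 1 1 = conj (circleRefl g 0 0) := by
  have h := conjSL_circleRefl g
  rw [Matrix.SpecialLinearGroup.SL2_inv_expl] at h
  exact congrArg (fun m : SL2C => m 0 0) h.symm

lemma re_circleRefl_zero_one (g : PSL2C) : (circleRefl g 0 1).re = 0 := by
  have h := conjSL_circleRefl g
  rw [Matrix.SpecialLinearGroup.SL2_inv_expl] at h
  exact self_eq_neg.1 (congrArg (fun m : SL2C => (m 0 1).re) h)

lemma re_circleRefl_one_zero (g : PSL2C) : (circleRefl g 1 0).re = 0 := by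
  have h := conjSL_circleRefl g
  rw [Matrix.SpecialLinearGroup.SL2_inv_expl] at h
  exact self_eq_neg.1 (congrArg (fun m : SL2C => (m 1 0).re) h)

lemma normSq_circleRefl (g : PSL2C) :
    Complex.normSq (circleRefl g 0 0) + (circleRefl g 0 1).im * (circleRefl g 1 0).im = 1 := by
  have hdet := (circleRefl g).det_coe
  rw [det_fin_two, circleRefl_one_one, Complex.mul_conj] at hdet
  have hre := congrArg Complex.re hdet
  simpa [re_circleRefl_zero_one] using hre

/-- The matrix `b = (1 + P) / √(2 + tr P)`. If `P P̄ = 1` then `P b̄ = b`, so `b` trivializes the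
cocycle `P` for complex conjugation, as in Hilbert's Theorem 90. -/
def cocycleRoot (P : SL2C) : Matrix (Fin 2) (Fin 2) ℂ :=
  (((√(2 + 2 * (P 0 0).re))⁻¹ : ℝ) : ℂ) • (1 + P.1)

lemma cocycleRoot_one : cocycleRoot 1 = 1 := by
  have hsqrt : √(2 + 2 * ((1 : SL2C) 0 0).re) = 2 := by
    rw [Matrix.SpecialLinearGroup.coe_one, one_apply_eq, Complex.one_re,
      show (2 + 2 * 1 : ℝ) = 2 ^ 2 by norm_num, Real.sqrt_sq zero_le_two]
  rw [cocycleRoot, hsqrt, show (1 : SL2C).1 = 1 from rfl,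
    ← two_smul ℂ (1 : Matrix (Fin 2) (Fin 2) ℂ), smul_smul]
  norm_num

lemma continuousAt_cocycleRoot : ContinuousAt cocycleRoot 1 := by
  have hcont : Continuous fun P : SL2C => √(2 + 2 * (P 0 0).re) :=
    (continuous_const.add (continuous_const.mul
      (Complex.continuous_re.comp (continuous_entry 0 0)))).sqrt
  have hne : √(2 + 2 * ((1 : SL2C) 0 0).re) ≠ 0 := by
    norm_num [Matrix.SpecialLinearGroup.coe_one]
  exact (Complex.continuous_ofReal.continuousAt.comp (hcont.continuousAt.inv₀ hne)).smul
    (continuous_const.add continuous_subtype_val).continuousAt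

lemma det_cocycleRoot {g : PSL2C} (hg : 0 < 2 + 2 * (circleRefl g 0 0).re) :
    (cocycleRoot (circleRefl g)).det = 1 := by
  have hdet : (1 + (circleRefl g).1).det = ((2 + 2 * (circleRefl g 0 0).re : ℝ) : ℂ) := by
    have h1 := (circleRefl g).det_coe
    have htrace := Complex.add_conj (circleRefl g 0 0)
    rw [← circleRefl_one_one] at htrace
    rw [det_fin_two] at h1 ⊢
    simp only [Matrix.add_apply, one_apply_eq, one_apply_ne zero_ne_one, one_apply_ne one_ne_zero]
    push_cast at htrace ⊢
    linear_combination h1 + htrace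
  rw [cocycleRoot, det_smul, hdet, Fintype.card_fin, ← Complex.ofReal_pow, ← Complex.ofReal_mul,
    inv_pow, Real.sq_sqrt hg.le, inv_mul_cancel₀ hg.ne', Complex.ofReal_one]

lemma circleRefl_mul_pr_eq_one {g : PSL2C} {b : SL2C} (hb : b.1 = cocycleRoot (circleRefl g)) :
    circleRefl (g * pr b) = 1 := by
  have hconj : (conjSL b).1 =
      (((√(2 + 2 * (circleRefl g 0 0).re))⁻¹ : ℝ) : ℂ) • (1 + (circleRefl g)⁻¹.1) := by
    rw [← conjSL_circleRefl]
    ext i j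
    have hone : conj ((1 : Matrix (Fin 2) (Fin 2) ℂ) i j) = (1 : Matrix (Fin 2) (Fin 2) ℂ) i j := by
      rw [one_apply, apply_ite conj, map_one, map_zero]
    rw [conjSL_apply, hb, cocycleRoot]
    simp only [Matrix.smul_apply, Matrix.add_apply, smul_eq_mul, map_mul, map_add,
      Complex.conj_ofReal, hone, conjSL_apply]
  rw [circleRefl_mul_pr, mul_assoc, inv_mul_eq_one]
  apply Subtype.ext
  rw [Matrix.SpecialLinearGroup.coe_mul, hconj, Matrix.mul_smul, Matrix.mul_add, Matrix.mul_one,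
    ← Matrix.SpecialLinearGroup.coe_mul, mul_inv_cancel, Matrix.SpecialLinearGroup.coe_one,
    add_comm (circleRefl g).1, hb, cocycleRoot]

lemma Hset_mul_mem_comap_circleRefl {O : Set PSL2C} (hO : O ∈ 𝓝 1) :
    Hset * O ∈ comap circleRefl (𝓝 1) := by
  have hO' : (fun m : SL2C => pr m⁻¹) ⁻¹' O ∈ 𝓝 1 :=
    (continuous_pr.comp continuous_inv).continuousAt.preimage_mem_nhds (by simpa using hO)
  obtain ⟨M, hM, hMO⟩ := (mem_nhds_induced _ _ _).1 hO'
  have hroot : cocycleRoot ⁻¹' M ∈ 𝓝 1 :=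
    continuousAt_cocycleRoot.preimage_mem_nhds (by rw [cocycleRoot_one]; exact hM)
  have hpos : ∀ᶠ P : SL2C in 𝓝 1, 0 < 2 + 2 * (P 0 0).re :=
    (continuous_const.add (continuous_const.mul (Complex.continuous_re.comp
      (continuous_entry 0 0)))).continuousAt.eventually (lt_mem_nhds (by simp))
  filter_upwards [preimage_mem_comap hroot, preimage_mem_comap hpos] with g hg hgpos
  let b : SL2C := ⟨cocycleRoot (circleRefl g), det_cocycleRoot hgpos⟩
  exact ⟨g * pr b, mem_Hset_iff.2 (circleRefl_mul_pr_eq_one rfl), pr b⁻¹, hMO (a := b) hg, by simp⟩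

/-- The `g` for which the circle `g⁻¹(ℝ ∪ {∞})` is, up to an error `δ`, a horizontal line
`Im z = r / 2` with `|r| < R`, that is, the reflection matrix `circleRefl g` is close to
`±[[1, ir], [0, 1]]`. These are neighbourhoods of the part of `𝒩V` over a bounded piece of `V`. -/
def tube (R δ : ℝ) : Set PSL2C :=
  {g | |(circleRefl g 0 1).im| < R ∧ |(circleRefl g 1 0).im| < δ ∧ 1 - δ < |(circleRefl g 0 0).re|}

lemma isOpen_tube (R δ : ℝ) : IsOpen (tube R δ) := by
  have h (i j : Fin 2) : Continuous fun g => circleRefl g i j :=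
    (continuous_entry i j).comp continuous_circleRefl
  exact (isOpen_lt (Complex.continuous_im.comp (h 0 1)).abs continuous_const).inter
    ((isOpen_lt (Complex.continuous_im.comp (h 1 0)).abs continuous_const).inter
      (isOpen_lt continuous_const (Complex.continuous_re.comp (h 0 0)).abs))

lemma tube_mono {R R' δ δ' : ℝ} (hR : R ≤ R') (hδ : δ ≤ δ') : tube R δ ⊆ tube R' δ' :=
  fun _ hg => ⟨hg.1.trans_le hR, hg.2.1.trans_le hδ, (sub_le_sub_left hδ 1).trans_lt hg.2.2⟩

lemma mul_mem_tube_iff {R δ : ℝ} {n : PSL2C} (hn : n ∈ Subgroup.normalizer Hset) {g : PSL2C} :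
    n * g ∈ tube R δ ↔ g ∈ tube R δ := by
  have hz := mem_normalizer_Hset_iff.1 hn
  unfold tube
  rw [Set.mem_ofPred_eq, Set.mem_ofPred_eq, circleRefl_mul_of_mem_center hz]
  obtain hz | hz := mem_center_SL2C_iff.1 hz <;> rw [hz]
  · rw [one_mul]
  · simp only [neg_mul, one_mul, Matrix.SpecialLinearGroup.coe_neg, Matrix.neg_apply,
      Complex.neg_im, Complex.neg_re, abs_neg]

lemma exists_re_circleRefl_eq_abs (g : PSL2C) : ∃ n ∈ Subgroup.normalizer Hset,
    (circleRefl (n * g) 0 0).re = |(circleRefl g 0 0).re| := by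
  obtain ⟨z, hz, hzg⟩ : ∃ z ∈ Subgroup.center SL2C,
      ((z * circleRefl g) 0 0).re = |(circleRefl g 0 0).re| := by
    obtain h | h := abs_choice (circleRefl g 0 0).re
    · exact ⟨1, one_mem _, by rw [one_mul, h]⟩
    · exact ⟨-1, mem_center_SL2C_iff.2 (.inr rfl), by
        simp only [neg_mul, one_mul, Matrix.SpecialLinearGroup.coe_neg, Matrix.neg_apply,
          Complex.neg_re, h]⟩
  obtain ⟨n, rfl⟩ := exists_circleRefl_eq hz
  exact ⟨n, mem_normalizer_Hset_iff.2 hz, by rw [circleRefl_mul_of_mem_center hz, hzg]⟩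

lemma coe_circleRefl_mul_pr (g : PSL2C) (m : SL2C) :
    (circleRefl (g * pr m)).1 = adjugate m.1 * (circleRefl g).1 * m.1.map conj := by
  rw [circleRefl_mul_pr, ← Matrix.SpecialLinearGroup.coe_inv]
  rfl

lemma circleRefl_mul_pr_tri (g : PSL2C) {l : ℝ} (hl : l ≠ 0) :
    (circleRefl (g * pr (tri l hl 0))).1 =
      !![circleRefl g 0 0, circleRefl g 0 1 / (l : ℂ) ^ 2;
        circleRefl g 1 0 * (l : ℂ) ^ 2, circleRefl g 1 1] := by
  have hl' : (l : ℂ) ≠ 0 := by exact_mod_cast hl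
  rw [coe_circleRefl_mul_pr, tri, adjugate_fin_two_of, eta_fin_two (circleRefl g).1,
    eta_fin_two (Matrix.map _ _), mul_fin_two, mul_fin_two]
  simp only [map_apply, of_apply, cons_val, map_zero, map_inv₀, Complex.conj_ofReal, neg_zero,
    zero_mul, mul_zero, add_zero, zero_add]
  congr! 3 <;> field_simp

lemma normSq_circleRefl_sub_one_lt {R δ : ℝ} {g : PSL2C} (hg : g ∈ tube R δ)
    (hre : 0 ≤ (circleRefl g 0 0).re) : Complex.normSq (circleRefl g 0 0 - 1) < (R + 2) * δ := by
  obtain ⟨h01, h10, h00⟩ := hg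
  rw [abs_of_nonneg hre] at h00
  have hprod : |(circleRefl g 0 1).im * (circleRefl g 1 0).im| ≤ R * δ := by
    rw [abs_mul]
    exact mul_le_mul h01.le h10.le (abs_nonneg _) ((abs_nonneg _).trans h01.le)
  have hdet := normSq_circleRefl g
  rw [Complex.normSq_apply] at hdet ⊢
  simp only [Complex.sub_re, Complex.sub_im, Complex.one_re, Complex.one_im]
  linarith [(abs_le.1 hprod).1]

lemma norm_circleRefl_mul_pr_tri_sub_one_lt {R δ l r : ℝ} (hl : l ≠ 0) (hr : 0 < r)
    (hRl : R ≤ r * l ^ 2) (hδl : δ * l ^ 2 ≤ r) (hRδ : (R + 2) * δ ≤ r ^ 2) {g : PSL2C}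
    (hg : g ∈ tube R δ) (hre : 0 ≤ (circleRefl g 0 0).re) (i j : Fin 2) :
    ‖circleRefl (g * pr (tri l hl 0)) i j - (1 : SL2C) i j‖ < r := by
  have hl2 : 0 < l ^ 2 := by positivity
  have h00 : ‖circleRefl g 0 0 - 1‖ < r := by
    rw [← sq_lt_sq₀ (norm_nonneg _) hr.le, Complex.sq_norm]
    exact (normSq_circleRefl_sub_one_lt hg hre).trans_le hRδ
  have h11 : ‖circleRefl g 1 1 - 1‖ < r := by
    rw [← Complex.norm_conj, map_sub, map_one, ← circleRefl_one_one] at h00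
    exact h00
  have h01 : ‖circleRefl g 0 1 / (l : ℂ) ^ 2‖ < r := by
    rw [norm_div, norm_pow, Complex.norm_real, Real.norm_eq_abs, sq_abs, div_lt_iff₀ hl2,
      ← Complex.abs_im_eq_norm.2 (re_circleRefl_zero_one g)]
    exact hg.1.trans_le hRl
  have h10 : ‖circleRefl g 1 0 * (l : ℂ) ^ 2‖ < r := by
    rw [norm_mul, norm_pow, Complex.norm_real, Real.norm_eq_abs, sq_abs,
      ← Complex.abs_im_eq_norm.2 (re_circleRefl_one_zero g)]
    exact (mul_lt_mul_of_pos_right hg.2.1 hl2).trans_le hδl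
  rw [circleRefl_mul_pr_tri]
  fin_cases i <;> fin_cases j
  · exact h00
  · simpa using h01
  · simpa using h10
  · exact h11

lemma exists_tube_mul_subset {O : Set PSL2C} (hO : O ∈ 𝓝 1) {R : ℝ} (hR : 0 ≤ R) :
    ∃ a : PSL2C, ∃ δ > 0, ∀ g ∈ tube R δ, g * a ∈ (Subgroup.normalizer Hset : Set PSL2C) * O := by
  obtain ⟨W, hW, hWO⟩ := mem_comap.1 (Hset_mul_mem_comap_circleRefl hO)
  obtain ⟨r, hr, hrW⟩ := exists_pos_forall_mem_of_mem_nhds hW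
  obtain ⟨l, hl, hRl⟩ : ∃ l : ℝ, 0 < l ∧ R ≤ r * l ^ 2 := by
    refine ⟨√((R + 1) / r), by positivity, ?_⟩
    rw [Real.sq_sqrt (by positivity), mul_div_cancel₀ _ hr.ne']
    linarith
  refine ⟨pr (tri l hl.ne' 0), min (r / l ^ 2) (r ^ 2 / (R + 2)), by positivity, fun g hg => ?_⟩
  obtain ⟨n, hn, hre⟩ := exists_re_circleRefl_eq_abs g
  have hng : circleRefl (n * g * pr (tri l hl.ne' 0)) ∈ W :=
    hrW _ (norm_circleRefl_mul_pr_tri_sub_one_lt hl.ne' hr hRl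
      ((le_div_iff₀ (by positivity)).1 (min_le_left _ _))
      ((le_div_iff₀' (by positivity)).1 (min_le_right _ _)) ((mul_mem_tube_iff hn).2 hg)
      (hre ▸ abs_nonneg _))
  obtain ⟨h, hh, o, ho, hho⟩ := hWO hng
  refine ⟨n⁻¹ * h, mul_mem (inv_mem hn) (Hset_subset_normalizer hh), o, ho, ?_⟩
  simp only [mul_assoc, hho, inv_mul_cancel_left]

lemma exists_isCompact_mul_eq_normalizer_Hset {Γ : Subgroup PSL2C} {K : Set PSL2C} (hKH : K ⊆ Hset)
    (hK : IsCompact K) (hcov : ∀ h ∈ Hset, ∃ γ ∈ ((Γ : Set PSL2C) ∩ Hset), ∃ k ∈ K, h = γ * k) :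
    ∃ L : Set PSL2C, L ⊆ Subgroup.normalizer Hset ∧ IsCompact L ∧
      ∀ n ∈ Subgroup.normalizer Hset, ∃ γ ∈ Γ, γ ∈ Subgroup.normalizer Hset ∧
        ∃ k ∈ L, n = γ * k := by
  obtain ⟨n₀, hn₀⟩ := exists_circleRefl_eq (mem_center_SL2C_iff.2 (.inr rfl))
  have hn₀N : n₀ ∈ Subgroup.normalizer Hset :=
    mem_normalizer_Hset_iff.2 (mem_center_SL2C_iff.2 (.inr hn₀))
  refine ⟨K * {1, n₀}, ?_, hK.mul (Set.toFinite _).isCompact, fun n hn => ?_⟩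
  · rintro _ ⟨k, hk, e, rfl | rfl, rfl⟩
    · exact mul_mem (Hset_subset_normalizer (hKH hk)) (one_mem _)
    · exact mul_mem (Hset_subset_normalizer (hKH hk)) hn₀N
  · obtain ⟨e, he, hne⟩ : ∃ e ∈ ({1, n₀} : Set PSL2C), n * e⁻¹ ∈ Hset := by
      obtain h | h := mem_center_SL2C_iff.1 (mem_normalizer_Hset_iff.1 hn)
      · exact ⟨1, .inl rfl, mul_inv_mem_Hset_iff.2 (h.trans circleRefl_one.symm)⟩
      · exact ⟨n₀, .inr rfl, mul_inv_mem_Hset_iff.2 (h.trans hn₀.symm)⟩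
    obtain ⟨γ, ⟨hγ, hγH⟩, k, hk, hnk⟩ := hcov _ hne
    exact ⟨γ, hγ, Hset_subset_normalizer hγH, k * e, Set.mul_mem_mul hk he,
      by rw [← mul_assoc, ← hnk, inv_mul_cancel_right]⟩

lemma exists_mem_normalizer_of_mul_mem_tube {Γ : Subgroup PSL2C} [DiscreteTopology Γ]
    (hcocpt : ∃ K : Set PSL2C, K ⊆ Hset ∧ IsCompact K ∧
      ∀ h ∈ Hset, ∃ γ ∈ ((Γ : Set PSL2C) ∩ Hset), ∃ k ∈ K, h = γ * k) {R : ℝ} (hR : 0 ≤ R) :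
    ∃ δ > 0, ∀ γ ∈ Γ, ∀ g ∈ tube R δ, γ * g ∈ tube R δ → γ ∈ Subgroup.normalizer Hset := by
  obtain ⟨K, hKH, hK, hcov⟩ := hcocpt
  obtain ⟨L, hLN, hL, hLcov⟩ := exists_isCompact_mul_eq_normalizer_Hset hKH hK hcov
  obtain ⟨O, hO, hON⟩ := exists_nhds_mem_of_mem_mul_mul Γ _ hLN hL hLcov
  obtain ⟨O₁, hO₁, hO₁O⟩ := exists_nhds_split_inv hO
  obtain ⟨a, δ, hδ, ha⟩ := exists_tube_mul_subset hO₁ hR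
  refine ⟨δ, hδ, fun γ hγ g hg hγg => hON γ hγ ?_⟩
  obtain ⟨n₁, hn₁, o₁, ho₁, h₁⟩ := ha g hg
  obtain ⟨n₂, hn₂, o₂, ho₂, h₂⟩ := ha _ hγg
  refine ⟨n₂ * (o₂ / o₁), Set.mul_mem_mul hn₂ (hO₁O o₂ ho₂ o₁ ho₁), n₁⁻¹, inv_mem hn₁, ?_⟩
  calc n₂ * (o₂ / o₁) * n₁⁻¹ = n₂ * o₂ * (n₁ * o₁)⁻¹ := by
        rw [_root_.mul_inv_rev, div_eq_mul_inv]
        simp only [mul_assoc]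
    _ = γ * g * a * (g * a)⁻¹ := congrArg₂ (fun x y => x * y⁻¹) h₂ h₁
    _ = γ := by group

lemma circleRefl_mul_pr_uMat (g : PSL2C) (z : ℂ) :
    (circleRefl (g * pr (uMat z))).1 =
      !![circleRefl g 0 0 - z * circleRefl g 1 0,
        (circleRefl g 0 0 - z * circleRefl g 1 0) * conj z +
          (circleRefl g 0 1 - z * circleRefl g 1 1);
        circleRefl g 1 0, circleRefl g 1 0 * conj z + circleRefl g 1 1] := by
  rw [coe_circleRefl_mul_pr, uMat, adjugate_fin_two_of, eta_fin_two (circleRefl g).1,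
    eta_fin_two (Matrix.map _ _), mul_fin_two, mul_fin_two]
  simp only [map_apply, of_apply, cons_val, map_zero, map_one, neg_zero, zero_mul, mul_zero,
    mul_one, one_mul, add_zero, zero_add, neg_mul, ← sub_eq_add_neg]

lemma circleRefl_vv (s : ℝ) :
    (circleRefl (vv s)).1 = !![1, -(2 * s * Complex.I); 0, 1] := by
  rw [vv, ← one_mul (pr _), circleRefl_mul_pr_uMat, circleRefl_one]
  simp only [Matrix.SpecialLinearGroup.coe_one, one_apply_eq, one_apply_ne zero_ne_one,
    one_apply_ne one_ne_zero, map_mul, Complex.conj_ofReal, Complex.conj_I, mul_zero, mul_one,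
    one_mul, sub_zero, zero_mul, zero_add, zero_sub]
  ring_nf

lemma exists_circleRefl_vv_eq {g : PSL2C} (h00 : circleRefl g 0 0 = 1)
    (h10 : circleRefl g 1 0 = 0) : ∃ s, circleRefl (vv s) = circleRefl g := by
  have h01 : -(2 * ((-(circleRefl g 0 1).im / 2 : ℝ) : ℂ) * Complex.I) = circleRefl g 0 1 :=
    Complex.ext (by simp [re_circleRefl_zero_one]) (by
      rw [Complex.neg_im, Complex.mul_I_im, ← Complex.ofReal_ofNat, ← Complex.ofReal_mul,
        Complex.ofReal_re]
      ring)
  refine ⟨-(circleRefl g 0 1).im / 2, Subtype.ext ?_⟩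
  rw [circleRefl_vv, h01, eq_comm]
  conv_lhs => rw [eta_fin_two (circleRefl g).1, h00, h10, circleRefl_one_one, h00, map_one]

lemma exists_mul_Vset_eq_of_forall_mem_tube {R : ℝ} {g : PSL2C} (hg : ∀ δ > 0, g ∈ tube R δ) :
    ∃ n ∈ Subgroup.normalizer Hset, ∃ w ∈ Vset, n * w = g := by
  obtain ⟨n, hn, hre⟩ := exists_re_circleRefl_eq_abs g
  have htube δ (hδ : 0 < δ) : n * g ∈ tube R δ := (mul_mem_tube_iff hn).2 (hg δ hδ)
  have h10 : circleRefl (n * g) 1 0 = 0 := Complex.ext (re_circleRefl_one_zero _)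
    (abs_nonpos_iff.1 (le_of_forall_gt_imp_ge_of_dense fun δ hδ => (htube δ hδ).2.1.le))
  have hre_le : 1 ≤ (circleRefl (n * g) 0 0).re :=
    hre ▸ le_of_forall_pos_lt_add fun δ hδ => sub_lt_iff_lt_add.1 (hg δ hδ).2.2
  have h00 : circleRefl (n * g) 0 0 = 1 := by
    have hnorm := normSq_circleRefl (n * g)
    rw [h10, Complex.zero_im, mul_zero, add_zero, Complex.normSq_apply] at hnorm
    exact Complex.ext (by rw [Complex.one_re]; nlinarith) (by rw [Complex.one_im]; nlinarith)
  obtain ⟨s, hs⟩ := exists_circleRefl_vv_eq h00 h10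
  exact ⟨n⁻¹ * (n * g * (vv s)⁻¹),
    mul_mem (inv_mem hn) (Hset_subset_normalizer (mul_inv_mem_Hset_iff.2 hs.symm)), vv s, ⟨s, rfl⟩,
    by group⟩

lemma exists_forall_subset_tube {D : Set PSL2C} (hD : D ⊆ Vset) (hDc : IsCompact D) :
    ∃ R > 0, ∀ δ > 0, D ⊆ tube R δ := by
  have hcont : Continuous fun g => (circleRefl g 0 1).im :=
    Complex.continuous_im.comp ((continuous_entry 0 1).comp continuous_circleRefl)
  obtain ⟨R, hR⟩ := hDc.exists_bound_of_continuousOn hcont.continuousOn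
  refine ⟨|R| + 1, by positivity, fun δ hδ d hd => ?_⟩
  have h01 := (hR d hd).trans_lt ((le_abs_self R).trans_lt (lt_add_one _))
  obtain ⟨s, rfl⟩ := hD hd
  exact ⟨h01, by simpa [circleRefl_vv] using hδ, by simpa [circleRefl_vv] using hδ⟩

lemma circleRefl_mul_uu_one_zero (g : PSL2C) (t : ℝ) :
    circleRefl (g * uu t) 1 0 = circleRefl g 1 0 := by
  simp [uu, circleRefl_mul_pr_uMat]

lemma re_circleRefl_mul_uu_zero_zero (g : PSL2C) (t : ℝ) :
    (circleRefl (g * uu t) 0 0).re = (circleRefl g 0 0).re := by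
  simp [uu, circleRefl_mul_pr_uMat, re_circleRefl_one_zero]

lemma exists_natDegree_le_im_circleRefl_mul_uu (g : PSL2C) : ∃ p : Polynomial ℝ,
    p.natDegree ≤ 2 ∧ ∀ t : ℝ, (circleRefl (g * uu t) 0 1).im = p.eval t := by
  refine ⟨.C (circleRefl g 0 1).im + .C (circleRefl g 0 0 - circleRefl g 1 1).im * .X -
    .C (circleRefl g 1 0).im * .X ^ 2, by compute_degree, fun t => ?_⟩
  simp only [uu, circleRefl_mul_pr_uMat, Complex.conj_ofReal, of_apply, cons_val, Complex.add_im,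
    Complex.sub_im, Complex.im_mul_ofReal, Complex.im_ofReal_mul, Polynomial.eval_sub,
    Polynomial.eval_add, Polynomial.eval_C, Polynomial.eval_mul, Polynomial.eval_X,
    Polynomial.eval_pow]
  ring

lemma exists_tube_separated {Γ : Subgroup PSL2C} [DiscreteTopology Γ]
    (hcocpt : ∃ K : Set PSL2C, K ⊆ Hset ∧ IsCompact K ∧
      ∀ h ∈ Hset, ∃ γ ∈ ((Γ : Set PSL2C) ∩ Hset), ∃ k ∈ K, h = γ * k) {g : PSL2C}
    (hg : ∀ γ ∈ Γ, ∀ n ∈ Subgroup.normalizer Hset, ∀ w ∈ Vset, γ * n * w ≠ g)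
    {R : ℝ} (hR : 0 ≤ R) :
    ∃ δ > 0, (∀ γ ∈ Γ, ∀ x ∈ tube R δ, γ * x ∈ tube R δ → γ ∈ Subgroup.normalizer Hset) ∧
      ∀ γ ∈ Γ, γ * g ∉ tube R δ := by
  obtain ⟨δ₀, hδ₀, hinj⟩ := exists_mem_normalizer_of_mul_mem_tube hcocpt hR
  by_cases hesc : ∀ γ ∈ Γ, γ * g ∉ tube R δ₀
  · exact ⟨δ₀, hδ₀, hinj, hesc⟩
  push Not at hesc
  obtain ⟨γ₀, hγ₀, hγ₀g⟩ := hesc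
  obtain ⟨δ₁, hδ₁, hγ₀g₁⟩ : ∃ δ₁ > 0, γ₀ * g ∉ tube R δ₁ := by
    by_contra! hall
    obtain ⟨n, hn, w, hw, hnw⟩ := exists_mul_Vset_eq_of_forall_mem_tube hall
    exact hg _ (inv_mem hγ₀) n hn w hw (by rw [mul_assoc, hnw, inv_mul_cancel_left])
  have hsub₀ : tube R (min δ₀ δ₁) ⊆ tube R δ₀ := tube_mono le_rfl (min_le_left _ _)
  refine ⟨min δ₀ δ₁, lt_min hδ₀ hδ₁,
    fun γ hγ x hx hγx => hinj γ hγ x (hsub₀ hx) (hsub₀ hγx), fun γ hγ hγg => hγ₀g₁ ?_⟩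
  have hγ_eq : γ * γ₀⁻¹ * (γ₀ * g) = γ * g := by group
  have hN : γ * γ₀⁻¹ ∈ Subgroup.normalizer Hset :=
    hinj _ (mul_mem hγ (inv_mem hγ₀)) _ hγ₀g (hγ_eq ▸ hsub₀ hγg)
  exact tube_mono le_rfl (min_le_right _ _) ((mul_mem_tube_iff hN).1 (hγ_eq ▸ hγg))

end CircleReflection

section Recurrence

open MeasureTheory Set

lemma continuous_uu : Continuous uu := by
  refine continuous_pr.comp (continuous_induced_rng.2 (continuous_matrix fun i j => ?_))
  fin_cases i <;> fin_cases j
  · exact continuous_const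
  · exact Complex.continuous_ofReal
  · exact continuous_const
  · exact continuous_const

lemma uu_zero : uu 0 = 1 := by
  rw [uu, ← map_one pr]
  congr
  ext i j
  fin_cases i <;> fin_cases j <;> simp [uMat]

lemma volume_mul_uu_mem_tube_le {ε R R' : ℝ} (hε : 0 < ε) (hRR' : R ≤ R')
    (hR' : 3 * (R * (2 * 3 / ε) ^ 2) < R') {δ : ℝ} {g : PSL2C} (hg : g ∉ tube R' δ) (T : ℝ) :
    volume {t | t ∈ Ioo 0 T ∧ g * uu t ∈ tube R δ} ≤
      ENNReal.ofReal ε * volume {t | t ∈ Ioo 0 T ∧ g * uu t ∈ tube R' δ} := by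
  obtain ⟨p, hp, him⟩ := exists_natDegree_le_im_circleRefl_mul_uu g
  have hmem S t : g * uu t ∈ tube S δ ↔ |p.eval t| < S ∧
      |(circleRefl g 1 0).im| < δ ∧ 1 - δ < |(circleRefl g 0 0).re| := by
    simp only [tube, mem_ofPred_eq, him, circleRefl_mul_uu_one_zero,
      re_circleRefl_mul_uu_zero_zero]
  rw [← mul_one g, ← uu_zero, hmem] at hg
  simp only [hmem]
  by_cases hdir : |(circleRefl g 1 0).im| < δ ∧ 1 - δ < |(circleRefl g 0 0).re|
  · have hp0 : R' ≤ |p.eval 0| := not_lt.1 fun h => hg ⟨h, hdir⟩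
    simpa only [hdir, and_true] using
      volume_sublevel_le hp hε hRR' (by norm_num at hR' ⊢; exact hR') hp0 (b := T)
  · simp only [hdir, and_false, ofPred_false, measure_empty, zero_le]

lemma mul_mem_tube_of_mul_mem_tube {Γ : Subgroup PSL2C} {R δ : ℝ}
    (hinj : ∀ γ ∈ Γ, ∀ x ∈ tube R δ, γ * x ∈ tube R δ → γ ∈ Subgroup.normalizer Hset)
    {γ γ' x : PSL2C} (hγ : γ ∈ Γ) (hγ' : γ' ∈ Γ) (hx : γ * x ∈ tube R δ)
    (hx' : γ' * x ∈ tube R δ) {S : ℝ} {y : PSL2C} (hy : γ * y ∈ tube S δ) :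
    γ' * y ∈ tube S δ := by
  have hcancel z : γ' * γ⁻¹ * (γ * z) = γ' * z := by group
  have hN : γ' * γ⁻¹ ∈ Subgroup.normalizer Hset :=
    hinj _ (mul_mem hγ' (inv_mem hγ)) _ hx (by rwa [hcancel])
  exact hcancel y ▸ (mul_mem_tube_iff hN).2 hy

lemma volume_exists_mul_uu_mem_tube_le {Γ : Subgroup PSL2C} {ε R R' δ : ℝ} (hε : 0 < ε)
    (hRR' : R ≤ R') (hR' : 3 * (R * (2 * 3 / ε) ^ 2) < R')
    (hinj : ∀ γ ∈ Γ, ∀ x ∈ tube R' δ, γ * x ∈ tube R' δ → γ ∈ Subgroup.normalizer Hset)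
    {g : PSL2C} (hg : ∀ γ ∈ Γ, γ * g ∉ tube R' δ) (T : ℝ) :
    volume {t | t ∈ Ioo 0 T ∧ ∃ γ ∈ Γ, γ * (g * uu t) ∈ tube R δ} ≤ ENNReal.ofReal (ε * T) := by
  let A : Set ℝ := {t | ∃ γ ∈ Γ, γ * (g * uu t) ∈ tube R δ}
  let visits (γ : PSL2C) : Set ℝ := {t | t ∈ Ioo 0 T ∧ γ * (g * uu t) ∈ tube R' δ}
  have hopen γ : IsOpen (visits γ) := isOpen_Ioo.inter ((isOpen_tube R' δ).preimage
    (continuous_const.mul (continuous_const.mul continuous_uu)))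
  have hsub {γ γ'} (hγ : γ ∈ Γ) (hγ' : γ' ∈ Γ) {t} (ht : t ∈ visits γ) (ht' : t ∈ visits γ') :
      visits γ ⊆ visits γ' := fun _ hs =>
    ⟨hs.1, mul_mem_tube_of_mul_mem_tube hinj hγ hγ' ht.2 ht'.2 hs.2⟩
  have hdisj : (visits '' Γ).PairwiseDisjoint id := by
    rintro _ ⟨γ, hγ, rfl⟩ _ ⟨γ', hγ', rfl⟩ hne
    exact disjoint_left.2 fun t ht ht' =>
      hne (Subset.antisymm (hsub hγ hγ' ht ht') (hsub hγ' hγ ht' ht))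
  have hvisit : ∀ γ ∈ Γ, volume (A ∩ visits γ) ≤ ENNReal.ofReal ε * volume (visits γ) := by
    intro γ hγ
    have hle := volume_mul_uu_mem_tube_le hε hRR' hR' (hg γ hγ) T
    simp only [mul_assoc γ] at hle
    refine (measure_mono ?_).trans hle
    rintro t ⟨⟨γ', hγ', ht'⟩, ht⟩
    exact ⟨ht.1, mul_mem_tube_of_mul_mem_tube hinj hγ' hγ (tube_mono hRR' le_rfl ht') ht.2 ht'⟩
  calc volume {t | t ∈ Ioo 0 T ∧ ∃ γ ∈ Γ, γ * (g * uu t) ∈ tube R δ}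
      ≤ volume (A ∩ ⋃₀ (visits '' Γ)) := measure_mono fun t ⟨ht, γ, hγ, hγt⟩ =>
        ⟨⟨γ, hγ, hγt⟩, visits γ, mem_image_of_mem _ hγ, ht, tube_mono hRR' le_rfl hγt⟩
    _ ≤ ENNReal.ofReal ε * volume (⋃₀ (visits '' Γ)) :=
        measure_inter_sUnion_le (forall_mem_image.2 fun γ _ => hopen γ) hdisj
          (forall_mem_image.2 hvisit)
    _ ≤ ENNReal.ofReal ε * volume (Ioo 0 T) := by
        gcongr
        exact sUnion_subset (forall_mem_image.2 fun γ _ => sep_subset _ _)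
    _ = ENNReal.ofReal (ε * T) := by rw [Real.volume_Ioo, sub_zero, ENNReal.ofReal_mul hε.le]

end Recurrence

lemma mkX_mem_image_iff {Γ : Subgroup PSL2C} {S : Set PSL2C} {g : PSL2C} :
    mkX Γ g ∈ mkX Γ '' S ↔ ∃ γ ∈ Γ, γ * g ∈ S := by
  constructor
  · rintro ⟨s, hs, hsg⟩
    exact ⟨s * g⁻¹, QuotientGroup.rightRel_apply.1 (Quotient.exact hsg.symm),
      by rwa [inv_mul_cancel_right]⟩
  · rintro ⟨γ, hγ, hS⟩
    exact ⟨γ * g, hS, Quotient.sound (QuotientGroup.rightRel_apply.2 (by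
      simpa using inv_mem hγ))⟩

lemma isOpen_image_mkX (Γ : Subgroup PSL2C) {S : Set PSL2C} (hS : IsOpen S) :
    IsOpen (mkX Γ '' S) :=
  isOpenMap_quotient_mk'_mul (Γ := Γ) S hS

theorem time_in_neighborhood_of_singular_set_small_general
    (Γ : Subgroup PSL2C) (hdisc : DiscreteTopology Γ)
    (hHcocpt : ∃ K : Set PSL2C, K ⊆ Hset ∧ IsCompact K ∧
      ∀ h ∈ Hset, ∃ γ ∈ ((Γ : Set PSL2C) ∩ Hset), ∃ k ∈ K, h = γ * k)
    (D : Set PSL2C) (hD : D ⊆ Vset) (hDcpt : IsCompact D)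
    (g : PSL2C)
    (hg : g ∉ {y | ∃ γ ∈ Γ, ∃ n ∈ NmlH, ∃ w ∈ Vset, y = γ * n * w})
    (ε : ℝ) (hε : 0 < ε) :
    ∃ Ω : Set (XΓ Γ), IsOpen Ω ∧
      {y | ∃ n ∈ NmlH, ∃ d ∈ D, y = mkX Γ (n * d)} ⊆ Ω ∧
      ∀ T > (0 : ℝ),
        MeasureTheory.volume {t : ℝ | t ∈ Set.Icc (0 : ℝ) T ∧ act Γ (mkX Γ g) (uu t) ∈ Ω}
          ≤ ENNReal.ofReal (ε * T) := by
  rw [← coe_normalizer_Hset] at hg ⊢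
  obtain ⟨R, hR, hDR⟩ := exists_forall_subset_tube hD hDcpt
  obtain ⟨R', hRR', hR'⟩ : ∃ R', R ≤ R' ∧ 3 * (R * (2 * 3 / ε) ^ 2) < R' :=
    ⟨_, le_max_left _ _, lt_max_of_lt_right (lt_add_one _)⟩
  obtain ⟨δ, hδ, hinj, hesc⟩ := exists_tube_separated hHcocpt (g := g)
    (fun γ hγ n hn w hw h => hg ⟨γ, hγ, n, hn, w, hw, h.symm⟩) (hR.le.trans hRR')
  refine ⟨mkX Γ '' tube R δ, isOpen_image_mkX Γ (isOpen_tube R δ), ?_, fun T _ => ?_⟩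
  · rintro _ ⟨n, hn, d, hd, rfl⟩
    exact Set.mem_image_of_mem _ ((mul_mem_tube_iff hn).2 (hDR δ hδ hd))
  · calc MeasureTheory.volume {t | t ∈ Set.Icc 0 T ∧ mkX Γ (g * uu t) ∈ mkX Γ '' tube R δ}
        = MeasureTheory.volume {t | t ∈ Set.Ioo 0 T ∧ mkX Γ (g * uu t) ∈ mkX Γ '' tube R δ} :=
          MeasureTheory.measure_congr
            (MeasureTheory.Ioo_ae_eq_Icc.symm.inter (MeasureTheory.ae_eq_refl _))
      _ ≤ ENNReal.ofReal (ε * T) := by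
          simp only [mkX_mem_image_iff]
          exact volume_exists_mul_uu_mem_tube_le hε hRR' hR' hinj hesc T

/-- Quantitative non-concentration near the singular set: if `Γ` is a uniform
lattice in `PSL(2,ℂ)` with `Γ ∩ H` cocompact in `H`, `D ⊆ V` is compact, and
`x = Γg` with `g ∉ Γ𝒩V`, then for every `ε > 0` there is an open set
`Ω ⊇ {Γ(nd) : n ∈ 𝒩, d ∈ D}` such that for all `T > 0` the time spent by
`t ↦ x·u_t`, `t ∈ [0,T]`, in `Ω` is at most `εT`. -/
theorem time_in_neighborhood_of_singular_set_small
    (Γ : Subgroup PSL2C) (hdisc : DiscreteTopology Γ) (hcpt : CompactSpace (XΓ Γ))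
    (hHcocpt : ∃ K : Set PSL2C, K ⊆ Hset ∧ IsCompact K ∧
      ∀ h ∈ Hset, ∃ γ ∈ ((Γ : Set PSL2C) ∩ Hset), ∃ k ∈ K, h = γ * k)
    (D : Set PSL2C) (hD : D ⊆ Vset) (hDcpt : IsCompact D)
    (g : PSL2C)
    (hg : g ∉ {y | ∃ γ ∈ Γ, ∃ n ∈ NmlH, ∃ w ∈ Vset, y = γ * n * w})
    (ε : ℝ) (hε : 0 < ε) :
    ∃ Ω : Set (XΓ Γ), IsOpen Ω ∧
      {y | ∃ n ∈ NmlH, ∃ d ∈ D, y = mkX Γ (n * d)} ⊆ Ω ∧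
      ∀ T > (0 : ℝ),
        MeasureTheory.volume {t : ℝ | t ∈ Set.Icc (0 : ℝ) T ∧ act Γ (mkX Γ g) (uu t) ∈ Ω}
          ≤ ENNReal.ofReal (ε * T) :=
  time_in_neighborhood_of_singular_set_small_general Γ hdisc hHcocpt D hD hDcpt g hg ε hε

end
end

section
/- Let (g_n) be a sequence in G = PSL(2,ℂ) with g_n → e and g_n ∉ VH = {vh : v ∈ V, h ∈ H} for all n. Then limsup_n U g_n H = limsup_n {u g_n h : u ∈ U, h ∈ H} contains a one-parameter semigroup of V. -/
open scoped MatrixGroups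
open Matrix Filter

noncomputable section

variable (Γ : Subgroup PSL2C)

/-- `S ⊆ PSL(2,ℂ)` is a one-parameter semigroup of `V` if
`S = {v_{tb} : t ≥ 0}` for some `b ≠ 0`. -/
def IsOneParSemigroupV (S : Set PSL2C) : Prop :=
  ∃ b : ℝ, b ≠ 0 ∧ S = {x | ∃ t : ℝ, 0 ≤ t ∧ x = vv (t * b)}


/-- The topological `limsup` of a sequence of subsets of a topological space:
the set of points `x` such that every neighborhood of `x` meets `Q n` for
infinitely many `n`. -/
def seqLimsup {α : Type*} [TopologicalSpace α] (Q : ℕ → Set α) : Set α :=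
  {x | ∀ O ∈ nhds x, {n | (O ∩ Q n).Nonempty}.Infinite}


open Complex Topology

/-!
Near the identity every `g ∈ SL(2,ℂ)` factors as `g = (1 + iX) · Re g` with `X = Im g · (Re g)⁻¹` a
small real traceless matrix, so `gH` is represented by the multiple of `1 + iX` of determinant one.
Real unipotents act on these representatives by conjugation. Writing `X = [[a, b], [c, -a]]`,
conjugation by `u_t` replaces `a` by `a + tc`, fixes `c`, and adds `-2ta - t²c` to `b`.
Choosing `t` so that this increment equals `s` gives `(a + tc)² = a² - cs`, so as `g → 1` the
conjugate tends to `1 + is E₁₂ = v_s`. Such a `t` exists as soon as `cs ≤ 0` and `(a, c) ≠ 0`; the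
latter holds when `g ∉ VH`, and the former can fail only for `s` of one sign. Hence either all `v_s`
with `s ≥ 0` or all `v_s` with `s ≤ 0` are limits.
-/

section Complexification

variable {n : Type*} [Fintype n] [DecidableEq n]

/-- A real square matrix regarded as a complex one. -/
abbrev complexify : Matrix n n ℝ →+* Matrix n n ℂ := (algebraMap ℝ ℂ).mapMatrix

/-- The matrix `1 + iX` for a real matrix `X`. For `n = 2` and `X` traceless these matrices are,
up to normalization of the determinant, local representatives of the cosets `gH`. -/
def oneAddI (X : Matrix n n ℝ) : Matrix n n ℂ := 1 + I • complexify X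

/-- The relative imaginary part `Im A · (Re A)⁻¹` of a complex matrix `A`, i.e. the real matrix `X`
with `A = (1 + iX) · Re A`. It is `0` when `Re A` is singular. -/
def relIm (A : Matrix n n ℂ) : Matrix n n ℝ := A.map im * (A.map re)⁻¹

lemma complexify_re_add_complexify_im (A : Matrix n n ℂ) :
    complexify (A.map re) + I • complexify (A.map im) = A := by
  ext i j
  simp [mul_comm I, re_add_im]

lemma oneAddI_relIm_mul_complexify_re {A : Matrix n n ℂ} (hA : (A.map re).det ≠ 0) :
    oneAddI (relIm A) * complexify (A.map re) = A := by
  have h : relIm A * A.map re = A.map im :=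
    nonsing_inv_mul_cancel_right _ _ hA.isUnit
  rw [oneAddI, add_mul, one_mul, smul_mul_assoc, ← map_mul, h, complexify_re_add_complexify_im]

lemma mul_complexify_re_inv {A : Matrix n n ℂ} (hA : (A.map re).det ≠ 0) :
    A * complexify (A.map re)⁻¹ = oneAddI (relIm A) := by
  nth_rw 1 [← oneAddI_relIm_mul_complexify_re hA]
  rw [mul_assoc, ← map_mul, mul_nonsing_inv _ hA.isUnit, map_one, mul_one]

@[fun_prop]
lemma continuous_oneAddI : Continuous (oneAddI : Matrix n n ℝ → Matrix n n ℂ) :=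
  continuous_const.add ((continuous_id.matrix_map continuous_ofReal).const_smul I)

lemma tendsto_relIm_one : Tendsto (relIm : Matrix n n ℂ → Matrix n n ℝ) (𝓝 1) (𝓝 0) := by
  have hre : ContinuousAt (fun A : Matrix n n ℂ ↦ A.map re) 1 :=
    (continuous_id.matrix_map continuous_re).continuousAt
  have him : ContinuousAt (fun A : Matrix n n ℂ ↦ A.map im) 1 :=
    (continuous_id.matrix_map continuous_im).continuousAt
  have hinv : ContinuousAt Inv.inv ((1 : Matrix n n ℂ).map re) := by
    refine continuousAt_matrix_inv _ ?_
    rw [Matrix.map_one _ zero_re one_re, det_one, Ring.inverse_eq_inv']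
    exact continuousAt_inv₀ one_ne_zero
  have him_one : (1 : Matrix n n ℂ).map im = 0 := by
    ext i j
    by_cases h : i = j <;> simp [h, one_apply]
  have h : Tendsto relIm (𝓝 1) (𝓝 (relIm (1 : Matrix n n ℂ))) :=
    him.mul (ContinuousAt.comp (f := fun A : Matrix n n ℂ ↦ A.map re) hinv hre)
  rwa [relIm, him_one, zero_mul] at h

lemma tendsto_det_re_one : Tendsto (fun A : Matrix n n ℂ ↦ (A.map re).det) (𝓝 1) (𝓝 1) := by
  have hcont : Continuous fun A : Matrix n n ℂ ↦ (A.map re).det :=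
    (continuous_id.matrix_map continuous_re).matrix_det
  simpa only [Matrix.map_one _ zero_re one_re, det_one] using hcont.tendsto 1

end Complexification

lemma oneAddI_fin_two (X : Matrix (Fin 2) (Fin 2) ℝ) :
    oneAddI X = !![1 + X 0 0 * I, X 0 1 * I; X 1 0 * I, 1 + X 1 1 * I] := by
  ext i j
  fin_cases i <;> fin_cases j <;> simp [oneAddI, mul_comm I]

lemma det_oneAddI (X : Matrix (Fin 2) (Fin 2) ℝ) :
    (oneAddI X).det = ((1 - X.det : ℝ) : ℂ) + X.trace * I := by
  rw [oneAddI_fin_two, det_fin_two_of, det_fin_two, trace_fin_two]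
  push_cast
  linear_combination ((X 0 0 : ℂ) * X 1 1 - X 0 1 * X 1 0) * I_sq

lemma trace_relIm {A : Matrix (Fin 2) (Fin 2) ℂ} (hA : A.det.im = 0)
    (hre : (A.map re).det ≠ 0) : (relIm A).trace = 0 := by
  have h := congrArg (fun B ↦ (det B).im) (oneAddI_relIm_mul_complexify_re hre)
  simp only [det_mul, det_oneAddI, ← RingHom.map_det, hA] at h
  simpa [hre] using h

lemma coe_uMat (z : ℂ) : (uMat z).1 = !![1, z; 0, 1] := rfl

lemma uMat_mul_oneAddI_mul_uMat_neg {X : Matrix (Fin 2) (Fin 2) ℝ} (hX : X.trace = 0) (t : ℝ) :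
    (uMat t).1 * oneAddI X * (uMat (-t)).1 =
      oneAddI !![X 0 0 + t * X 1 0, X 0 1 - (t ^ 2 * X 1 0 + 2 * t * X 0 0);
        X 1 0, -(X 0 0 + t * X 1 0)] := by
  have hX11 : X 1 1 = -X 0 0 := by rw [trace_fin_two] at hX; linarith
  simp only [oneAddI_fin_two, coe_uMat, mul_fin_two, hX11]
  ext i j
  fin_cases i <;> fin_cases j <;> simp <;> ring

lemma oneAddI_strictUpper (s : ℝ) : oneAddI !![0, s; 0, 0] = (uMat (s * I)).1 := by
  simp [oneAddI_fin_two, coe_uMat]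

/-- The set `VH` of products, whose complement contains the points `g` for which `UgH` blows up. -/
def VHset : Set PSL2C := {x | ∃ v ∈ Vset, ∃ h ∈ Hset, x = v * h}

/-- The double coset `UgH`, whose behaviour as `g → e` is the subject of the blowup. -/
def UHset (g : PSL2C) : Set PSL2C := {x | ∃ t : ℝ, ∃ h ∈ Hset, x = uu t * g * h}

lemma isOpenQuotientMap_pr : IsOpenQuotientMap pr :=
  haveI : IsTopologicalGroup SL2C := SpecialLinearGroup.topologicalGroup
  QuotientGroup.isOpenQuotientMap_mk

lemma pr_mem_VHset {g : SL2C} (hre : (g.1.map re).det ≠ 0) (h00 : relIm g.1 0 0 = 0)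
    (h10 : relIm g.1 1 0 = 0) : pr g ∈ VHset := by
  have h11 : relIm g.1 1 1 = 0 := by
    have htr := trace_relIm (by simp [g.2]) hre
    rwa [trace_fin_two, h00, zero_add] at htr
  have hg : (uMat (relIm g.1 0 1 * I)).1 * complexify (g.1.map re) = g.1 := by
    have hX : relIm g.1 = !![0, relIm g.1 0 1; 0, 0] := by
      rw [eta_fin_two (relIm g.1), h00, h10, h11]
      simp
    rw [← oneAddI_strictUpper, ← hX, oneAddI_relIm_mul_complexify_re hre]
  have hdet : (g.1.map re).det = 1 := by
    have h := congrArg det hg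
    rw [det_mul, (uMat _).2, g.2, one_mul, ← RingHom.map_det] at h
    exact ofReal_injective h
  refine ⟨vv (relIm g.1 0 1), ⟨_, rfl⟩, _, ⟨⟨g.1.map re, hdet⟩, rfl⟩, ?_⟩
  rw [vv, ← map_mul]
  exact congrArg pr (Subtype.ext hg.symm)

lemma exists_pr_mem_UHset_eq_smul {g : SL2C} (hre : 0 < (g.1.map re).det) (t : ℝ) :
    ∃ z : SL2C, pr z ∈ UHset (pr g) ∧
      z.1 = √(g.1.map re).det • ((uMat t).1 * oneAddI (relIm g.1) * (uMat (-t)).1) := by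
  set δ := (g.1.map re).det with hδ
  have hdet : (√δ • (g.1.map re)⁻¹ * !![1, -t; 0, 1]).det = 1 := by
    simp [Real.sq_sqrt hre.le, ← hδ, hre.ne']
  let h : SpecialLinearGroup (Fin 2) ℝ := ⟨_, hdet⟩
  refine ⟨uMat t * g * SpecialLinearGroup.map (algebraMap ℝ ℂ) h, ⟨t, _, ⟨h, rfl⟩, ?_⟩, ?_⟩
  · rw [map_mul, map_mul, uu]
  · have hu : complexify !![1, -t; 0, 1] = (uMat (-t)).1 := by
      ext i j
      fin_cases i <;> fin_cases j <;> simp [coe_uMat]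
    have hsmul : complexify (√δ • (g.1.map re)⁻¹) = √δ • complexify (g.1.map re)⁻¹ :=
      map_smul (Algebra.ofId ℝ ℂ).mapMatrix _ _
    calc (uMat t).1 * g.1 * complexify (√δ • (g.1.map re)⁻¹ * !![1, -t; 0, 1])
        = √δ • ((uMat t).1 * (g.1 * complexify (g.1.map re)⁻¹) * (uMat (-t)).1) := by
          rw [map_mul, hu, hsmul]
          simp only [smul_mul_assoc, mul_smul_comm, mul_assoc]
      _ = _ := by rw [mul_complexify_re_inv hre.ne']

lemma exists_sq_mul_add_two_mul_mul_add_eq_zero {a c s : ℝ} (hac : ¬(a = 0 ∧ c = 0))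
    (hcs : c * s ≤ 0) : ∃ t : ℝ, t ^ 2 * c + 2 * t * a + s = 0 := by
  by_cases hc : c = 0
  · have ha : a ≠ 0 := fun ha ↦ hac ⟨ha, hc⟩
    exact ⟨-s / (2 * a), by rw [hc]; field_simp; ring⟩
  · have hdiscrim : discrim c (2 * a) s = √(discrim c (2 * a) s) * √(discrim c (2 * a) s) := by
      refine (Real.mul_self_sqrt ?_).symm
      rw [discrim]
      nlinarith [sq_nonneg a]
    obtain ⟨t, ht⟩ := exists_quadratic_eq_zero hc ⟨_, hdiscrim⟩
    exact ⟨t, by linear_combination ht⟩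

lemma tendsto_add_mul_of_quadratic {ι : Type*} {l : Filter ι} {a c t : ι → ℝ} {s : ℝ}
    (ha : Tendsto a l (𝓝 0)) (hc : Tendsto c l (𝓝 0))
    (ht : ∀ᶠ i in l, t i ^ 2 * c i + 2 * t i * a i + s = 0) :
    Tendsto (fun i ↦ a i + t i * c i) l (𝓝 0) := by
  have hsq : Tendsto (fun i ↦ √(a i ^ 2 - c i * s)) l (𝓝 0) := by
    simpa using ((ha.pow 2).sub (hc.mul_const s)).sqrt
  refine squeeze_zero_norm' ?_ hsq
  filter_upwards [ht] with i hi
  exact Real.abs_le_sqrt (le_of_eq (by linear_combination c i * hi))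

lemma tendsto_conj_uMat {ι : Type*} {l : Filter ι} {A : ι → Matrix (Fin 2) (Fin 2) ℂ} {t : ι → ℝ}
    {s : ℝ} (hA : Tendsto A l (𝓝 1)) (hdetA : ∀ i, (A i).det.im = 0)
    (ht : ∀ᶠ i in l, t i ^ 2 * relIm (A i) 1 0 + 2 * t i * relIm (A i) 0 0 + s = 0) :
    Tendsto (fun i ↦ √((A i).map re).det •
        ((uMat (t i)).1 * oneAddI (relIm (A i)) * (uMat (-t i)).1)) l (𝓝 (uMat (s * I)).1) := by
  have hX (j k : Fin 2) : Tendsto (fun i ↦ relIm (A i) j k) l (𝓝 0) :=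
    ((continuous_id.matrix_elem j k).tendsto 0).comp (tendsto_relIm_one.comp hA)
  have hdet : Tendsto (fun i ↦ ((A i).map re).det) l (𝓝 1) := tendsto_det_re_one.comp hA
  set d : ι → ℝ := fun i ↦ relIm (A i) 0 0 + t i * relIm (A i) 1 0 with d_def
  have hd : Tendsto d l (𝓝 0) := tendsto_add_mul_of_quadratic (hX 0 0) (hX 1 0) ht
  have hlim : Tendsto (fun i ↦ √((A i).map re).det •
      oneAddI !![d i, relIm (A i) 0 1 + s; relIm (A i) 1 0, -d i]) l (𝓝 (uMat (s * I)).1) := by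
    have hcont : Continuous fun p : ℝ × ℝ × ℝ × ℝ ↦
        √p.1 • oneAddI !![p.2.1, p.2.2.1 + s; p.2.2.2, -p.2.1] := by fun_prop
    have h := (hcont.tendsto (1, 0, 0, 0)).comp
      (hdet.prodMk_nhds (hd.prodMk_nhds ((hX 0 1).prodMk_nhds (hX 1 0))))
    simpa [oneAddI_strictUpper, Function.comp_def] using h
  refine hlim.congr' ?_
  filter_upwards [ht, hdet.eventually_ne one_ne_zero] with i hti hdeti
  rw [uMat_mul_oneAddI_mul_uMat_neg (trace_relIm (hdetA i) hdeti), d_def, ← sub_neg_eq_add _ s,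
    ← eq_neg_of_add_eq_zero_left hti]

lemma eventually_inter_UHset_nonempty {ι : Type*} {l : Filter ι} {g : ι → SL2C} {t : ι → ℝ} {s : ℝ}
    (hg : Tendsto g l (𝓝 1))
    (ht : ∀ᶠ i in l, t i ^ 2 * relIm (g i).1 1 0 + 2 * t i * relIm (g i).1 0 0 + s = 0)
    {O : Set PSL2C} (hO : O ∈ 𝓝 (vv s)) : ∀ᶠ i in l, (O ∩ UHset (pr (g i))).Nonempty := by
  have hval : Tendsto (fun i ↦ (g i).1) l (𝓝 1) :=
    (continuous_subtype_val.tendsto (1 : SL2C)).comp hg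
  have hlim := tendsto_conj_uMat hval (fun i ↦ by simp [(g i).2]) ht
  obtain ⟨W, hW, hWO⟩ := (mem_nhds_subtype _ _ _).mp
    (isOpenQuotientMap_pr.continuous.continuousAt.preimage_mem_nhds hO)
  have hdet := (tendsto_det_re_one.comp hval).eventually (lt_mem_nhds one_pos)
  filter_upwards [hdet, hlim hW] with i hdeti hWi
  obtain ⟨z, hz, hzeq⟩ := exists_pr_mem_UHset_eq_smul hdeti (t i)
  have hzW : z.1 ∈ W := hzeq ▸ hWi
  exact ⟨pr z, hWO hzW, hz⟩

lemma eventually_nhds_one_inter_UHset_nonempty {s : ℝ} {O : Set PSL2C} (hO : O ∈ 𝓝 (vv s)) :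
    ∀ᶠ g in 𝓝 (1 : SL2C), pr g ∉ VHset → relIm g.1 1 0 * s ≤ 0 →
      (O ∩ UHset (pr g)).Nonempty := by
  let N : Set SL2C := {g | ∃ t : ℝ, t ^ 2 * relIm g.1 1 0 + 2 * t * relIm g.1 0 0 + s = 0}
  choose! t ht using fun g (hg : g ∈ N) ↦ hg
  have hN : ∀ᶠ g in 𝓝 (1 : SL2C), g ∈ N → (O ∩ UHset (pr g)).Nonempty :=
    eventually_inf_principal.mp <| eventually_inter_UHset_nonempty (tendsto_id'.mpr inf_le_left)
      ((eventually_principal.mpr ht).filter_mono inf_le_right) hO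
  have hdet : ∀ᶠ g : SL2C in 𝓝 1, (g.1.map re).det ≠ 0 :=
    (tendsto_det_re_one.comp (continuous_subtype_val.tendsto (1 : SL2C))).eventually_ne one_ne_zero
  filter_upwards [hN, hdet] with g hgN hdetg hg hs
  exact hgN (exists_sq_mul_add_two_mul_mul_add_eq_zero
    (fun h ↦ hg (pr_mem_VHset hdetg h.1 h.2)) hs)

lemma eventually_inter_UHset_nonempty_or {s s' : ℝ} (hs : s * s' ≤ 0) {O O' : Set PSL2C}
    (hO : O ∈ 𝓝 (vv s)) (hO' : O' ∈ 𝓝 (vv s')) :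
    ∀ᶠ g in 𝓝 (1 : PSL2C), g ∉ VHset → (O ∩ UHset g).Nonempty ∨ (O' ∩ UHset g).Nonempty := by
  rw [← map_one pr, ← isOpenQuotientMap_pr.map_nhds_eq, eventually_map]
  filter_upwards [eventually_nhds_one_inter_UHset_nonempty hO,
    eventually_nhds_one_inter_UHset_nonempty hO'] with g h h' hg
  have hsign (c : ℝ) : c * s ≤ 0 ∨ c * s' ≤ 0 := by
    by_contra! hpos
    nlinarith [mul_pos hpos.1 hpos.2, mul_nonneg (sq_nonneg c) (neg_nonneg.mpr hs)]
  exact (hsign _).imp (h hg) (h' hg)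

lemma mem_seqLimsup_or_mem_seqLimsup {α : Type*} [TopologicalSpace α] {Q : ℕ → Set α} {x y : α}
    (h : ∀ O ∈ 𝓝 x, ∀ O' ∈ 𝓝 y, ∃ᶠ n in atTop, (O ∩ Q n).Nonempty ∨ (O' ∩ Q n).Nonempty) :
    x ∈ seqLimsup Q ∨ y ∈ seqLimsup Q := by
  simp only [frequently_or_distrib, Nat.frequently_atTop_iff_infinite] at h
  by_contra! hxy
  simp only [seqLimsup, Set.mem_ofPred_eq, not_forall] at hxy
  obtain ⟨⟨O, hO, hinf⟩, ⟨O', hO', hinf'⟩⟩ := hxy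
  exact (h O hO O' hO').elim hinf hinf'

/-- Unipotent blowup: if `g_n → e` in `G = PSL(2,ℂ)` with `g_n ∉ VH`, then
`limsup_n U g_n H` contains a one-parameter semigroup of `V`. -/
theorem unipotent_blowup_VH
    (g : ℕ → PSL2C) (hconv : Tendsto g atTop (nhds 1))
    (hg : ∀ n, g n ∉ {x | ∃ v ∈ Vset, ∃ h ∈ Hset, x = v * h}) :
    ∃ S : Set PSL2C, IsOneParSemigroupV S ∧
      S ⊆ seqLimsup (fun n => {x | ∃ t : ℝ, ∃ h ∈ Hset, x = uu t * g n * h}) := by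
  set Q : ℕ → Set PSL2C := fun n ↦ UHset (g n)
  have dichotomy (s s' : ℝ) (hs : s * s' ≤ 0) : vv s ∈ seqLimsup Q ∨ vv s' ∈ seqLimsup Q :=
    mem_seqLimsup_or_mem_seqLimsup fun O hO O' hO' ↦ Eventually.frequently <|
      (hconv.eventually (eventually_inter_UHset_nonempty_or hs hO hO')).mono fun n hn ↦ hn (hg n)
  by_cases h : ∀ s ≥ 0, vv s ∈ seqLimsup Q
  · refine ⟨_, ⟨1, one_ne_zero, rfl⟩, ?_⟩
    rintro _ ⟨t, ht, rfl⟩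
    exact h _ (by simpa using ht)
  · push Not at h
    obtain ⟨s, hs, hsQ⟩ := h
    refine ⟨_, ⟨-1, by norm_num, rfl⟩, ?_⟩
    rintro _ ⟨t, ht, rfl⟩
    exact (dichotomy s _ (by nlinarith [mul_nonneg hs ht])).resolve_left hsQ

end
end
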